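/- Let n \ge 1 and a \ge 1 be integers, and write g(y) := y^{2n+1} \cdot (1 + y^2 + y^4 + ... + y^{2a-2})^{n+1} = \sum_k g_k y^k. There exists an integer N (depending on n and a) such that for every odd integer q > N, the number of tuples x \in (ZMod q)^n satisfying: x_i \ne (k : ZMod q) for all integers 0 \le k \le a and all i; 2x_i \ne (k : ZMod q) for all odd integers k with 1 \le k \le 2a-1 and all i; and x_i - x_j \ne (k : ZMod q) and x_i + x_j \ne (k : ZMod q) for all integers 0 \le k \le a and all 1 \le i < j \le n, equals (1/a^{n+1}) \sum_k g_k (q-k)^n. -/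

import Mathlib

open Polynomial

/-- `1 + y^2 + y^4 + ... + y^(2(m-1))`. -/
noncomputable def phi2 (m : ℕ) : ℚ[X] := ∑ i ∈ Finset.range m, X ^ (2 * i)

/-- For `g = ∑_k g_k y^k`, the sum `∑_k g_k (q - k)^n`. -/
noncomputable def polysum (g : ℚ[X]) (q n : ℕ) : ℚ :=
  ∑ k ∈ Finset.range (g.natDegree + 1), g.coeff k * ((q : ℚ) - (k : ℚ)) ^ n

/-- The number of `n`-tuples over `ZMod q` with `x_i ≠ 0, 1, ..., a`;
`2x_i ≠ 1, 3, ..., 2a-1`; and `x_i ± x_j ≠ 0, 1, ..., a` for `i < j`. -/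
noncomputable def W (n q a : ℕ) : ℕ :=
  Set.ncard {x : Fin n → ZMod q |
    (∀ i, ∀ k : ℤ, 0 ≤ k → k ≤ (a : ℤ) → x i ≠ (k : ZMod q)) ∧
    (∀ i, ∀ k : ℤ, Odd k → 1 ≤ k → k ≤ 2 * (a : ℤ) - 1 → 2 * x i ≠ (k : ZMod q)) ∧
    (∀ i j : Fin n, i < j → ∀ k : ℤ, 0 ≤ k → k ≤ (a : ℤ) →
      x i - x j ≠ (k : ZMod q) ∧ x i + x j ≠ (k : ZMod q))}

/-!
Encode a point of `(ZMod (2m+1))^n` by the absolute values and signs of its least residues. Sorting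
the absolute values gives a signed permutation, and the point avoids the arrangement exactly when
the consecutive gaps in `0 ≤ p_1 ≤ ... ≤ p_n ≤ m + 1` are at least `1`, and at least `a + 1` at the
descents of that signed permutation. Subtract `1` from every gap and divide by `a`: for every choice
of remainders `r` this leaves gaps with total `k = (m - n - ∑ r_i) / a`, which have to be at least
`1` at the descents. Over all signed permutations together such gaps describe an arbitrary tuple of
`n` independent signed positions, so there are `(2k)^n` of them. Hence the number of points is the
sum of `(2(m - n - ∑ r_i) / a)^n` over those `r ∈ {0, ..., a-1}^(n+1)` with `a ∣ m - n - ∑ r_i`.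

The divisibility condition may be replaced by its mean value `1 / a`: summing a periodic function of
mean zero times a polynomial over one residue lowers the degree of the polynomial, so `n + 1` such
summations annihilate a polynomial of degree `n`. The sum over all `r` is what expanding `g` gives.
-/

/-! ### Averaging over residues -/

section Polynomial

variable {R : Type*} [CommRing R]

theorem degree_taylor_sub_self_lt {p : R[X]} {n : ℕ} (hp : p.degree < (n + 1 : ℕ)) (r : R) :
    (taylor r p - p).degree < n := by
  rcases eq_or_ne p 0 with rfl | hp0
  · simp
  · have hlt : (taylor r p - p).degree < p.degree := by
      rw [← degree_taylor p r]
      exact degree_sub_lt_left (degree_taylor p r) (by simpa [taylor_eq_zero] using hp0)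
        (leadingCoeff_taylor r p)
    rw [degree_eq_natDegree hp0] at hp hlt
    exact hlt.trans_le (by exact_mod_cast Nat.lt_succ_iff.1 (by exact_mod_cast hp))

theorem sum_mul_eval_sub_sum_eq_zero {a N : ℕ} {c : ℤ → R}
    (hc : ∀ x, ∑ i : Fin a, c (x - (i : ℕ)) = 0) {p : R[X]} (hp : p.degree < N) (x : ℤ) :
    ∑ r : Fin N → Fin a, c (x - ∑ i, (r i : ℕ)) * p.eval ((x - ∑ i, (r i : ℕ) : ℤ) : R) = 0 := by
  induction N generalizing c p with
  | zero =>
    have hp0 : p = 0 := by simpa using hp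
    simp [hp0]
  | succ N ih =>
    -- As `c` has mean zero, subtracting `p y` from `p (y - i)` leaves the inner sum unchanged.
    have inner (y : ℤ) : ∑ i : Fin a, c (y - (i : ℕ)) * p.eval ((y - (i : ℕ) : ℤ) : R) =
        ∑ i : Fin a, c (y - (i : ℕ)) * (taylor (-(i : ℕ) : R) p - p).eval (y : R) := by
      simp only [eval_sub, taylor_eval, mul_sub, Finset.sum_sub_distrib, ← Finset.sum_mul, hc]
      simp [sub_eq_add_neg, add_comm]
    calc
      _ = ∑ s : Fin N → Fin a, ∑ i : Fin a, c (x - ∑ j, (s j : ℕ) - (i : ℕ)) *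
            p.eval ((x - ∑ j, (s j : ℕ) - (i : ℕ) : ℤ) : R) := by
        rw [← (Fin.consEquiv fun _ => Fin a).sum_comp, Fintype.sum_prod_type_right]
        simp only [Fin.consEquiv_apply, Fin.sum_univ_succ, Fin.cons_zero, Fin.cons_succ,
          Nat.cast_add, sub_add_eq_sub_sub_swap]
      _ = ∑ i : Fin a, ∑ s : Fin N → Fin a, c (x - ∑ j, (s j : ℕ) - (i : ℕ)) *
            (taylor (-(i : ℕ) : R) p - p).eval ((x - ∑ j, (s j : ℕ) : ℤ) : R) := by
        simp only [inner]
        exact Finset.sum_comm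
      _ = 0 := Finset.sum_eq_zero fun i _ =>
        ih (c := fun y => c (y - (i : ℕ)))
          (fun y => by simpa only [sub_right_comm] using hc (y - (i : ℕ)))
          (degree_taylor_sub_self_lt hp _)

end Polynomial

theorem sum_dvd_indicator {a : ℕ} (ha : 0 < a) (x : ℤ) :
    ∑ i : Fin a, (if (a : ℤ) ∣ x - (i : ℕ) then 1 else 0 : ℚ) = 1 := by
  have hpos : (0 : ℤ) < a := by exact_mod_cast ha
  have hmod_nonneg := x.emod_nonneg hpos.ne'
  have hmod_lt := x.emod_lt_of_pos hpos
  obtain ⟨i₀, hi₀⟩ : ∃ i₀ : Fin a, ((i₀ : ℕ) : ℤ) = x % a :=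
    ⟨⟨(x % a).toNat, by omega⟩, Int.toNat_of_nonneg hmod_nonneg⟩
  have dvd_iff (i : Fin a) : (a : ℤ) ∣ x - (i : ℕ) ↔ i = i₀ := by
    rw [← Int.modEq_iff_dvd, Int.ModEq, Int.emod_eq_of_lt (by omega) (by omega), Fin.ext_iff]
    omega
  simp [dvd_iff]

theorem sum_dvd_indicator_mul_pow {a : ℕ} (ha : 0 < a) (n : ℕ) (x : ℤ) :
    ∑ r : Fin (n + 1) → Fin a,
        (if (a : ℤ) ∣ x - ∑ i, (r i : ℕ) then (a : ℚ) else 0) * (x - ∑ i, (r i : ℕ) : ℤ) ^ n =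
      ∑ r : Fin (n + 1) → Fin a, ((x - ∑ i, (r i : ℕ) : ℤ) : ℚ) ^ n := by
  have mean_zero (y : ℤ) :
      ∑ i : Fin a, ((if (a : ℤ) ∣ y - (i : ℕ) then (a : ℚ) else 0) - 1) = 0 := by
    have := congrArg ((a : ℚ) * ·) (sum_dvd_indicator ha y)
    simp only [Finset.mul_sum, mul_ite, mul_one, mul_zero] at this
    simp [Finset.sum_sub_distrib, this]
  have h := sum_mul_eval_sub_sum_eq_zero
    (c := fun y : ℤ => (if (a : ℤ) ∣ y then (a : ℚ) else 0) - 1) mean_zero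
    (p := X ^ n) (N := n + 1) (by rw [degree_X_pow]; exact_mod_cast n.lt_succ_self) x
  simpa [sub_mul, Finset.sum_sub_distrib, sub_eq_zero] using h

theorem polysum_sum_X_pow {ι : Type*} (s : Finset ι) (e : ι → ℕ) (q n : ℕ) :
    polysum (∑ i ∈ s, X ^ e i) q n = ∑ i ∈ s, ((q : ℚ) - e i) ^ n := by
  let F : ℚ[X] →ₗ[ℚ] ℚ := lsum fun k => ((q : ℚ) - k) ^ n • LinearMap.id
  have polysum_eq (g : ℚ[X]) : polysum g q n = F g := by
    rw [lsum_apply, sum_over_range _ (by simp)]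
    simp [polysum, mul_comm]
  have F_X_pow (k : ℕ) : F (X ^ k) = ((q : ℚ) - k) ^ n := by
    rw [lsum_apply, ← monomial_one_right_eq_X_pow, sum_monomial_index _ _ (by simp)]
    simp
  simp only [polysum_eq, map_sum, F_X_pow]

theorem phi2_pow (a N : ℕ) :
    phi2 a ^ N = ∑ r : Fin N → Fin a, X ^ (2 * ∑ i, (r i : ℕ)) := by
  simp only [phi2, Finset.sum_range, Fintype.sum_pow, Finset.prod_pow_eq_pow_sum,
    Finset.mul_sum]

/-! ### Gaps and positions -/

/-- The vectors of natural numbers with sum `L` and entries bounded below by `b`. They record the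
gaps between consecutive points on an interval of length `L`. -/
def gapVectors {m : ℕ} (b : Fin m → ℕ) (L : ℕ) : Finset (Fin m → ℕ) :=
  {d ∈ Finset.univ.piAntidiag L | ∀ i, b i ≤ d i}

theorem mem_gapVectors {m L : ℕ} {b d : Fin m → ℕ} :
    d ∈ gapVectors b L ↔ ∑ i, d i = L ∧ b ≤ d := by
  simp [gapVectors, Pi.le_def]

theorem card_gapVectors_add {m : ℕ} (e b : Fin m → ℕ) (L : ℕ) :
    (gapVectors (e + b) (∑ i, e i + L)).card = (gapVectors b L).card := by
  refine (Finset.card_nbij' (e + ·) (· - e) ?_ ?_ ?_ ?_).symm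
  · intro d hd
    simpa [mem_gapVectors, Finset.sum_add_distrib] using hd
  · intro d hd
    simp only [Finset.mem_coe, mem_gapVectors] at hd ⊢
    obtain ⟨d, rfl⟩ := le_iff_exists_add.1 ((le_add_right le_rfl).trans hd.2)
    simpa [Finset.sum_add_distrib] using hd
  · intro d _
    exact add_tsub_cancel_left e d
  · intro d hd
    exact add_tsub_cancel_of_le (le_trans (le_add_right le_rfl) (mem_gapVectors.1 hd).2)

theorem card_filter_gapVectors_mod {a m L : ℕ} (ha : 0 < a) (δ : Fin m → ℕ) {r : Fin m → ℕ}
    (hr : ∀ i, r i < a) (hL : ∑ i, r i ≤ L) :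
    ((gapVectors (a • δ) L).filter fun d => ∀ i, d i % a = r i).card =
      if a ∣ L - ∑ i, r i then (gapVectors δ ((L - ∑ i, r i) / a)).card else 0 := by
  have sum_eq {d : Fin m → ℕ} (hd : ∀ i, d i % a = r i) :
      ∑ i, d i = ∑ i, r i + a * ∑ i, d i / a := by
    simp only [← hd, Finset.mul_sum, ← Finset.sum_add_distrib, Nat.mod_add_div]
  split_ifs with hdvd
  · obtain ⟨k, hk⟩ := hdvd
    rw [hk, Nat.mul_div_cancel_left k ha]
    have mod_eq (d : Fin m → ℕ) (i) : (r i + a * d i) % a = r i := by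
      rw [Nat.add_mul_mod_self_left, Nat.mod_eq_of_lt (hr i)]
    have div_eq (d : Fin m → ℕ) (i) : (r i + a * d i) / a = d i := by
      rw [Nat.add_mul_div_left _ _ ha, Nat.div_eq_of_lt (hr i), zero_add]
    refine Finset.card_nbij' (fun d i => d i / a) (fun d i => r i + a * d i) ?_ ?_ ?_ ?_
    · intro d hd
      simp only [Finset.coe_filter, Set.mem_ofPred_eq, Finset.mem_coe, mem_gapVectors] at hd ⊢
      obtain ⟨⟨hsum, hle⟩, hmod⟩ := hd
      have := sum_eq hmod
      refine ⟨Nat.eq_of_mul_eq_mul_left ha (by omega), fun i => ?_⟩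
      rw [Nat.le_div_iff_mul_le ha, mul_comm]
      exact hle i
    · intro d hd
      simp only [Finset.coe_filter, Set.mem_ofPred_eq, Finset.mem_coe, mem_gapVectors] at hd ⊢
      refine ⟨⟨?_, fun i => le_add_left (Nat.mul_le_mul_left a (hd.2 i))⟩, mod_eq d⟩
      rw [Finset.sum_add_distrib, ← Finset.mul_sum, hd.1]
      omega
    · intro d hd
      funext i
      simp only [← (Finset.mem_filter.1 hd).2 i, Nat.mod_add_div]
    · intro d _
      exact funext (div_eq d)
  · rw [Finset.card_eq_zero, Finset.filter_eq_empty_iff]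
    intro d hd hmod
    refine hdvd ⟨∑ i, d i / a, ?_⟩
    have := sum_eq hmod
    have := (mem_gapVectors.1 hd).1
    omega

theorem sum_val_le_mul {a m : ℕ} (r : Fin m → Fin a) : ∑ i, (r i : ℕ) ≤ m * a := by
  simpa using Finset.sum_le_card_nsmul Finset.univ (fun i => (r i : ℕ)) a fun i _ => (r i).2.le

theorem card_gapVectors_smul {a m L : ℕ} (ha : 0 < a) (hL : m * a ≤ L) (δ : Fin m → ℕ) :
    (gapVectors (a • δ) L).card = ∑ r : Fin m → Fin a,
      if a ∣ L - ∑ i, (r i : ℕ) then (gapVectors δ ((L - ∑ i, (r i : ℕ)) / a)).card else 0 := by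
  rw [Finset.card_eq_sum_card_fiberwise (t := Finset.univ)
    (f := fun d i => (⟨d i % a, Nat.mod_lt _ ha⟩ : Fin a)) fun _ _ => Finset.mem_univ _]
  refine Finset.sum_congr rfl fun r _ => ?_
  rw [← card_filter_gapVectors_mod ha δ (fun i => (r i).2) ((sum_val_le_mul r).trans hL)]
  simp only [funext_iff, Fin.ext_iff]

/-- The finite sequence `s` with the endpoint `l` prepended and the endpoint `r` appended. -/
def withEnds {n : ℕ} {α : Type*} (l r : α) (s : Fin n → α) : Fin (n + 2) → α :=
  Fin.cons (α := fun _ => α) l (Fin.snoc (α := fun _ => α) s r)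

section WithEnds

variable {n : ℕ} {α β : Type*} (l r : α) (s : Fin n → α)

@[simp]
theorem withEnds_zero : withEnds l r s 0 = l := rfl

@[simp]
theorem withEnds_last : withEnds l r s (Fin.last _) = r := by
  rw [withEnds, ← Fin.succ_last, Fin.cons_succ, Fin.snoc_last]

@[simp]
theorem withEnds_castSucc_succ (j : Fin n) : withEnds l r s j.castSucc.succ = s j := by
  rw [withEnds, Fin.cons_succ, Fin.snoc_castSucc]

theorem forall_fin_add_two {P : Fin (n + 2) → Prop} :
    (∀ i, P i) ↔ P 0 ∧ (∀ j : Fin n, P j.castSucc.succ) ∧ P (Fin.last _) := by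
  rw [Fin.forall_fin_succ, Fin.forall_fin_succ', Fin.succ_last]

theorem withEnds_prodMk (l' r' : β) (s' : Fin n → β) (i : Fin (n + 2)) :
    withEnds (l, l') (r, r') (fun j => (s j, s' j)) i =
      (withEnds l r s i, withEnds l' r' s' i) := by
  revert i
  simp [forall_fin_add_two]

variable {l r s} in
theorem withEnds_chain_iff {S : α → α → Prop} [IsTrans α S] (hn : 0 < n) :
    (∀ i : Fin (n + 1), S (withEnds l r s i.castSucc) (withEnds l r s i.succ)) ↔
      (∀ i, S l (s i)) ∧ (∀ i, S (s i) r) ∧ ∀ i j, i < j → S (s i) (s j) := by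
  rw [← Fin.liftFun_iff_succ S (f := withEnds l r s)]
  change (∀ i j, i < j → S (withEnds l r s i) (withEnds l r s j)) ↔ _
  have no_gt_last (j : Fin n) : ¬ Fin.last (n + 1) < j.castSucc.succ := (Fin.le_last _).not_gt
  have lt_last (j : Fin n) : j.castSucc.succ < Fin.last (n + 1) :=
    Fin.succ_lt_succ_iff.2 (Fin.castSucc_lt_last j)
  simp only [forall_fin_add_two, withEnds_zero, withEnds_last, withEnds_castSucc_succ,
    lt_irrefl, Fin.succ_pos, Fin.not_lt_zero, Fin.last_pos, no_gt_last, lt_last,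
    Fin.succ_lt_succ_iff, Fin.castSucc_lt_castSucc_iff, true_imp_iff, false_imp_iff, true_and,
    and_true, implies_true]
  constructor
  · rintro ⟨⟨hl, -⟩, hmid⟩
    exact ⟨hl, fun i => (hmid i).2, fun i => (hmid i).1⟩
  · rintro ⟨hl, hr, hmid⟩
    exact ⟨⟨hl, _root_.trans (hl ⟨0, hn⟩) (hr ⟨0, hn⟩)⟩, fun i => ⟨hmid i, hr i⟩⟩

end WithEnds

/-- The sequences `s` in `[0, L]` whose gaps, including the gap from `0` to the first entry and the
gap from the last entry to `L`, are bounded below by `b`. -/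
def spacedPositions {n : ℕ} (b : Fin (n + 1) → ℕ) (L : ℕ) : Set (Fin n → ℕ) :=
  {s | ∀ i : Fin (n + 1), withEnds 0 L s i.castSucc + b i ≤ withEnds 0 L s i.succ}

theorem partialSum_last {M : Type*} [AddCommMonoid M] {n : ℕ} (d : Fin n → M) :
    Fin.partialSum d (Fin.last n) = ∑ i, d i := by
  rw [← List.sum_ofFn, Fin.partialSum, List.take_of_length_le (by simp)]

theorem withEnds_partialSum {n : ℕ} (d : Fin (n + 1) → ℕ) :
    withEnds 0 (∑ i, d i) (fun j : Fin n => Fin.partialSum d j.castSucc.succ) =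
      Fin.partialSum d := by
  funext i
  revert i
  simp [forall_fin_add_two, partialSum_last]

theorem partialSum_sub_withEnds {n L : ℕ} {b : Fin (n + 1) → ℕ} {s : Fin n → ℕ}
    (hs : s ∈ spacedPositions b L) :
    Fin.partialSum (fun i => withEnds 0 L s i.succ - withEnds 0 L s i.castSucc) =
      withEnds 0 L s := by
  funext i
  induction i using Fin.induction with
  | zero => simp
  | succ i ih =>
    rw [Fin.partialSum_succ, ih, add_tsub_cancel_of_le (le_of_add_le_left (hs i))]

theorem bijOn_partialSum {n : ℕ} (b : Fin (n + 1) → ℕ) (L : ℕ) :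
    Set.BijOn (fun d (j : Fin n) => Fin.partialSum d j.castSucc.succ)
      (gapVectors b L) (spacedPositions b L) := by
  refine Set.InvOn.bijOn
    (f' := fun s i => withEnds 0 L s i.succ - withEnds 0 L s i.castSucc) ⟨?_, ?_⟩ ?_ ?_
  · intro d hd
    obtain ⟨rfl, -⟩ := mem_gapVectors.1 hd
    simp only [withEnds_partialSum]
    funext i
    rw [Fin.partialSum_succ, add_tsub_cancel_left]
  · intro s hs
    simp only [partialSum_sub_withEnds hs, withEnds_castSucc_succ]
  · intro d hd i
    obtain ⟨rfl, hle⟩ := mem_gapVectors.1 hd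
    simp only [withEnds_partialSum]
    rw [Fin.partialSum_succ]
    exact add_le_add_right (hle i) _
  · intro s hs
    refine mem_gapVectors.2 ⟨?_, fun i => le_tsub_of_add_le_left (hs i)⟩
    rw [← partialSum_last, partialSum_sub_withEnds hs, withEnds_last]

/-! ### Signed placements on a labelled line -/

/-- The indicator, as a natural number, of a weak descent from `u` to `v`. Equality counts as a
descent, so that `Separated c d` is irreflexive for `0 < d`. -/
def weakDescent {α : Type*} [LinearOrder α] (u v : α) : ℕ := if u < v then 0 else 1

/-- For points `(position, label)` of a labelled line: `y` lies above `x` by at least `c`, and by at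
least `c + d` if the label descends from `x` to `y`. -/
def Separated {α : Type*} [LinearOrder α] (c d : ℕ) (x y : ℕ × α) : Prop :=
  x.1 + (c + d * weakDescent x.2 y.2) ≤ y.1

section Separated

variable {α : Type*} [LinearOrder α] {c d : ℕ}

instance : IsTrans (ℕ × α) (Separated c d) where
  trans x y z hxy hyz := by
    have descent_le : weakDescent x.2 z.2 ≤ weakDescent x.2 y.2 + weakDescent y.2 z.2 := by
      unfold weakDescent
      split_ifs <;> first | omega | exact absurd (lt_trans ‹x.2 < y.2› ‹y.2 < z.2›) ‹_›
    have := Nat.mul_le_mul_left d descent_le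
    simp only [Separated, mul_add] at *
    omega

theorem Separated.toLex_lt (hd : 0 < d) {x y : ℕ × α} (h : Separated c d x y) :
    toLex x < toLex y := by
  rw [Prod.Lex.toLex_lt_toLex]
  unfold Separated weakDescent at h
  split_ifs at h with hlt
  · rcases Nat.lt_or_eq_of_le (le_of_add_le_left h) with h | h
    exacts [Or.inl h, Or.inr ⟨h, hlt⟩]
  · exact Or.inl (by omega)

end Separated

/-- The label of coordinate `i` with the given sign. Positive coordinates get the labels
`-n < ... < -1`, negative ones the labels `n > ... > 1`, and `0` is left for the ends of the line.
With this order, two consecutive magnitudes have to differ by more than `a` exactly when the label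
descends. -/
def signedLabel {n : ℕ} (i : Fin n) (pos : Bool) : ℤ := if pos then (i : ℤ) - n else n - i

theorem signedLabel_neg_iff {n : ℕ} {i : Fin n} {b : Bool} : signedLabel i b < 0 ↔ b = true := by
  cases b <;> simp [signedLabel]

theorem signedLabel_pos_iff {n : ℕ} {i : Fin n} {b : Bool} : 0 < signedLabel i b ↔ b = false := by
  cases b <;> simp [signedLabel]

theorem eq_of_signedLabel_eq {n : ℕ} {i j : Fin n} {b b' : Bool}
    (h : signedLabel i b = signedLabel j b') : i = j := by
  cases b <;> cases b' <;> simp only [signedLabel] at h <;> grind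

/-- Coordinate `i` of a tuple of signed magnitudes, as a point `(position, label)` of the line. -/
def labelled {n : ℕ} (x : Fin n → ℕ × Bool) (i : Fin n) : ℕ × ℤ :=
  ((x i).1, signedLabel i (x i).2)

/-- The `n`-tuples of signed magnitudes that are separated from each other and from the two ends `0`
and `L` of the line. Signs are stored apart from magnitudes because for `c = 0` the position `0` can
be occupied with negative sign. -/
def placements (n c d L : ℕ) : Set (Fin n → ℕ × Bool) :=
  {x | (∀ i, Separated c d (0, 0) (labelled x i)) ∧ (∀ i, Separated c d (labelled x i) (L, 0)) ∧
    Pairwise fun i j =>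
      Separated c d (labelled x i) (labelled x j) ∨ Separated c d (labelled x j) (labelled x i)}

/-- The underlying set of the hyperoctahedral group: a permutation `σ` and the sign of each value
`σ j`, indexed by the place `j`. -/
abbrev SignedPerm (n : ℕ) : Type := Equiv.Perm (Fin n) × (Fin n → Bool)

namespace SignedPerm

variable {n : ℕ}

/-- The labels of the signed values `σ 0, ..., σ (n - 1)`, with the label `0` of the ends of the
line at both ends. -/
def word (w : SignedPerm n) : Fin (n + 2) → ℤ :=
  withEnds 0 0 fun j => signedLabel (w.1 j) (w.2 j)

/-- The descent indicators of the `n + 1` consecutive pairs of the word. -/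
def descents (w : SignedPerm n) (i : Fin (n + 1)) : ℕ :=
  weakDescent (w.word i.castSucc) (w.word i.succ)

/-- The tuple of signed magnitudes whose sorted magnitudes are `s` and whose coordinates appear in
the order, and with the signs, given by `w`. -/
def place (w : SignedPerm n) (s : Fin n → ℕ) (i : Fin n) : ℕ × Bool :=
  (s (w.1.symm i), w.2 (w.1.symm i))

@[simp]
theorem place_apply (w : SignedPerm n) (s : Fin n → ℕ) (j : Fin n) :
    w.place s (w.1 j) = (s j, w.2 j) := by
  simp [place]

theorem mem_spacedPositions_iff (hn : 0 < n) {c d L : ℕ} (w : SignedPerm n) (s : Fin n → ℕ) :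
    s ∈ spacedPositions (fun i => c + d * w.descents i) L ↔
      (∀ j, Separated c d (0, 0) (labelled (w.place s) (w.1 j))) ∧
      (∀ j, Separated c d (labelled (w.place s) (w.1 j)) (L, 0)) ∧
      ∀ i j, i < j →
        Separated c d (labelled (w.place s) (w.1 i)) (labelled (w.place s) (w.1 j)) := by
  simp only [← withEnds_chain_iff hn, labelled, place_apply, withEnds_prodMk]
  rfl

theorem eq_sort_of_mem_spacedPositions (hn : 0 < n) {c d L : ℕ} (hd : 0 < d) {w : SignedPerm n}
    {s : Fin n → ℕ} (hs : s ∈ spacedPositions (fun i => c + d * w.descents i) L) :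
    w.1 = Tuple.sort fun i => toLex (labelled (w.place s) i) := by
  have hmono : StrictMono fun j => toLex (labelled (w.place s) (w.1 j)) := fun i j hij =>
    (((w.mem_spacedPositions_iff hn s).1 hs).2.2 i j hij).toLex_lt hd
  exact Tuple.eq_sort_iff.2 ⟨hmono.monotone, fun i j hij heq => absurd heq (hmono hij).ne⟩

theorem bijOn_place (hn : 0 < n) {c d : ℕ} (hd : 0 < d) (L : ℕ) :
    Set.BijOn (fun z : SignedPerm n × (Fin n → ℕ) => z.1.place z.2)
      {z | z.2 ∈ spacedPositions (fun i => c + d * z.1.descents i) L} (placements n c d L) := by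
  refine ⟨?_, ?_, ?_⟩
  · rintro ⟨w, s⟩ hs
    obtain ⟨hl, hr, hmid⟩ := (w.mem_spacedPositions_iff hn s).1 hs
    refine ⟨w.1.surjective.forall.2 hl, w.1.surjective.forall.2 hr, ?_⟩
    refine w.1.surjective.forall₂.2 fun i j hij => ?_
    exact (lt_or_gt_of_ne fun h => hij (congrArg w.1 h)).imp (hmid i j) (hmid j i)
  · rintro ⟨w, s⟩ hs ⟨w', s'⟩ hs' heq
    have heq : w.place s = w'.place s' := heq
    have hperm : w.1 = w'.1 := by
      rw [eq_sort_of_mem_spacedPositions hn hd hs, eq_sort_of_mem_spacedPositions hn hd hs', heq]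
    have hval (j : Fin n) : (s j, w.2 j) = (s' j, w'.2 j) := by
      rw [← place_apply, ← place_apply, ← hperm]
      exact congrFun heq (w.1 j)
    simp only [Prod.mk.injEq] at hval
    exact Prod.ext (Prod.ext hperm (funext fun j => (hval j).2)) (funext fun j => (hval j).1)
  · rintro x ⟨hl, hr, hmid⟩
    let key (i : Fin n) : ℕ ×ₗ ℤ := toLex (labelled x i)
    have key_injective : Function.Injective key := fun i j hij =>
      eq_of_signedLabel_eq (congrArg Prod.snd (toLex_inj.1 hij))
    let σ := Tuple.sort key
    have hmono : StrictMono (key ∘ σ) :=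
      (Tuple.monotone_sort key).strictMono_of_injective (key_injective.comp σ.injective)
    let w : SignedPerm n := (σ, fun j => (x (σ j)).2)
    have place_eq : w.place (fun j => (x (σ j)).1) = x := by simp [w, place, funext_iff]
    refine ⟨(w, fun j => (x (σ j)).1), ?_, place_eq⟩
    refine (w.mem_spacedPositions_iff hn _).2 ?_
    rw [place_eq]
    refine ⟨fun j => hl _, fun j => hr _, fun i j hij => ?_⟩
    refine (hmid (σ.injective.ne hij.ne)).resolve_right fun h => ?_
    exact (hmono hij).not_gt (h.toLex_lt hd)

end SignedPerm

theorem ncard_setOf_snd_mem {ι β : Type*} [Fintype ι] (S : ι → Set β)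
    (hS : ∀ i, (S i).Finite) :
    {z : ι × β | z.2 ∈ S z.1}.ncard = ∑ i, (S i).ncard := by
  have (i : ι) : Finite (S i) := hS i
  simp only [← Nat.card_coe_set_eq]
  rw [← Nat.card_sigma]
  exact Nat.card_congr (Equiv.subtypeProdEquivSigmaSubtype fun i b => b ∈ S i)

theorem ncard_placements {n : ℕ} (hn : 0 < n) (c : ℕ) {d : ℕ} (hd : 0 < d) (L : ℕ) :
    (placements n c d L).ncard =
      ∑ w : SignedPerm n, (gapVectors (fun i => c + d * w.descents i) L).card := by
  have hbij (w : SignedPerm n) := bijOn_partialSum (fun i => c + d * w.descents i) L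
  rw [← (SignedPerm.bijOn_place hn hd L).ncard_eq,
    ncard_setOf_snd_mem (fun w : SignedPerm n => spacedPositions (fun i => c + d * w.descents i) L)
      fun w => (hbij w).finite_iff_finite.1 (Finset.finite_toSet _)]
  exact Finset.sum_congr rfl fun w _ => by rw [← Set.ncard_coe_finset, (hbij w).ncard_eq]

theorem mem_placements_zero_one {n k : ℕ} {x : Fin n → ℕ × Bool} :
    x ∈ placements n 0 1 k ↔ ∀ i,
      x i ∈ Finset.Icc 1 k ×ˢ {true} ∪ Finset.range k ×ˢ {false} := by
  have pairwise_separated : Pairwise fun i j =>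
      Separated 0 1 (labelled x i) (labelled x j) ∨
        Separated 0 1 (labelled x j) (labelled x i) := by
    intro i j hij
    have := mt eq_of_signedLabel_eq (a := signedLabel i (x i).2 = signedLabel j (x j).2) hij
    unfold Separated labelled weakDescent
    split_ifs <;> omega
  simp only [placements, Set.mem_ofPred_eq, pairwise_separated, and_true, ← forall_and]
  refine forall_congr' fun i => ?_
  unfold Separated labelled weakDescent
  rcases x i with ⟨p, b⟩
  cases b <;> simp [signedLabel_neg_iff, signedLabel_pos_iff]

theorem ncard_placements_zero_one (n k : ℕ) : (placements n 0 1 k).ncard = (2 * k) ^ n := by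
  let B : Finset (ℕ × Bool) := Finset.Icc 1 k ×ˢ {true} ∪ Finset.range k ×ˢ {false}
  have card_B : B.card = 2 * k := by
    rw [Finset.card_union_of_disjoint (Finset.disjoint_product.2 (Or.inr (by simp)))]
    simp [two_mul]
  have placements_eq : placements n 0 1 k = ↑(Fintype.piFinset fun _ : Fin n => B) := by
    ext x
    simp only [mem_placements_zero_one, Fintype.coe_piFinset, Set.mem_univ_pi, Finset.mem_coe, B]
  rw [placements_eq, Set.ncard_coe_finset, Fintype.card_piFinset_const, card_B]

/-! ### Residues modulo an odd number -/

theorem intCast_zmod_eq_iff {q : ℕ} {y z : ℤ} (hl : -2 * (q : ℤ) < y - z) (hu : y - z < q) :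
    (y : ZMod q) = z ↔ y = z ∨ y + q = z := by
  rw [ZMod.intCast_eq_intCast_iff_dvd_sub]
  constructor
  · rintro ⟨t, ht⟩
    have : -1 < t := by nlinarith
    have : t < 2 := by nlinarith
    obtain rfl | rfl : t = 0 ∨ t = 1 := by omega
    · left; omega
    · right; omega
  · rintro (rfl | rfl) <;> simp

theorem forall_intCast_zmod_ne_iff {q a : ℕ} (ha : a < q) {y : ℤ} (hy : y.natAbs < q) :
    (∀ k : ℤ, 0 ≤ k → k ≤ a → (y : ZMod q) ≠ k) ↔
      ¬ (0 ≤ y ∧ y ≤ a) ∧ ¬ (0 ≤ y + q ∧ y + q ≤ a) := by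
  constructor
  · intro h
    exact ⟨fun hy' => h y hy'.1 hy'.2 rfl, fun hy' => h (y + q) hy'.1 hy'.2 (by simp)⟩
  · intro h k hk₀ hka
    rw [Ne, intCast_zmod_eq_iff (by omega) (by omega)]
    omega

theorem forall_odd_two_mul_intCast_zmod_ne_iff {m a : ℕ} (ha : a ≤ m) {y : ℤ} (hy : y.natAbs ≤ m) :
    (∀ k : ℤ, Odd k → 1 ≤ k → k ≤ 2 * (a : ℤ) - 1 → 2 * (y : ZMod (2 * m + 1)) ≠ k) ↔
      a ≤ y + m := by
  have cast_two_mul : 2 * (y : ZMod (2 * m + 1)) = ((2 * y : ℤ) : ZMod (2 * m + 1)) := by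
    push_cast; rfl
  rw [cast_two_mul]
  constructor
  · intro h
    by_contra! hlt
    refine h (2 * y + (2 * m + 1 : ℕ)) ⟨y + m, by push_cast; ring⟩ (by omega) (by omega) ?_
    rw [intCast_zmod_eq_iff (by omega) (by omega)]
    exact Or.inr rfl
  · rintro h k ⟨l, rfl⟩ hk₁ hka
    rw [Ne, intCast_zmod_eq_iff (by omega) (by omega)]
    omega

/-- The absolute value of the least residue of `x`, and whether that residue is nonnegative. -/
def signedMagnitude {q : ℕ} (x : ZMod q) : ℕ × Bool :=
  (x.valMinAbs.natAbs, decide (0 ≤ x.valMinAbs))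

theorem signedMagnitude_injective (q : ℕ) :
    Function.Injective (signedMagnitude : ZMod q → ℕ × Bool) := by
  intro x y h
  simp only [signedMagnitude, Prod.mk.injEq, decide_eq_decide] at h
  apply ZMod.injective_valMinAbs
  omega

theorem exists_signedMagnitude_eq {m : ℕ} {t : ℕ × Bool} (hpos : 0 < t.1) (hle : t.1 ≤ m) :
    ∃ x : ZMod (2 * m + 1), signedMagnitude x = t := by
  obtain ⟨p, b⟩ := t
  have valMinAbs_eq (y : ℤ) (hy : y.natAbs ≤ m) : (y : ZMod (2 * m + 1)).valMinAbs = y := by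
    rw [ZMod.valMinAbs_spec]
    exact ⟨rfl, by push_cast; omega, by push_cast; omega⟩
  cases b
  · refine ⟨((-p : ℤ) : ZMod (2 * m + 1)), ?_⟩
    rw [signedMagnitude, valMinAbs_eq _ (by simpa using hle)]
    simpa using hpos.ne'
  · refine ⟨((p : ℤ) : ZMod (2 * m + 1)), ?_⟩
    rw [signedMagnitude, valMinAbs_eq _ (by simpa using hle)]
    simp

section Residues

variable {n m a : ℕ}

theorem separated_ends_iff (i : Fin n) (y : ℤ) :
    Separated 1 a (0, 0) (y.natAbs, signedLabel i (decide (0 ≤ y))) ∧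
        Separated 1 a (y.natAbs, signedLabel i (decide (0 ≤ y))) (m + 1, 0) ↔
      y.natAbs ≤ m ∧ ¬ (0 ≤ y ∧ y ≤ a) ∧ a ≤ y + m := by
  have := i.2
  simp only [Separated, weakDescent, signedLabel, decide_eq_true_eq]
  split_ifs <;> omega

theorem separated_or_separated_iff {i j : Fin n} (hij : i < j) {y z : ℤ}
    (hy : y.natAbs ≤ m ∧ ¬ (0 ≤ y ∧ y ≤ a) ∧ a ≤ y + m)
    (hz : z.natAbs ≤ m ∧ ¬ (0 ≤ z ∧ z ≤ a) ∧ a ≤ z + m) :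
    (Separated 1 a (y.natAbs, signedLabel i (decide (0 ≤ y)))
          (z.natAbs, signedLabel j (decide (0 ≤ z))) ∨
        Separated 1 a (z.natAbs, signedLabel j (decide (0 ≤ z)))
          (y.natAbs, signedLabel i (decide (0 ≤ y)))) ↔
      (¬ (0 ≤ y - z ∧ y - z ≤ a) ∧ ¬ (0 ≤ y - z + (2 * m + 1) ∧ y - z + (2 * m + 1) ≤ a)) ∧
      (¬ (0 ≤ y + z ∧ y + z ≤ a) ∧ ¬ (0 ≤ y + z + (2 * m + 1) ∧ y + z + (2 * m + 1) ≤ a)) := by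
  have := i.2
  have := j.2
  have : (i : ℕ) < j := hij
  simp only [Separated, weakDescent, signedLabel, decide_eq_true_eq]
  split_ifs <;> omega

theorem natAbs_valMinAbs_two_mul_add_one_le (x : ZMod (2 * m + 1)) : x.valMinAbs.natAbs ≤ m := by
  have := x.natAbs_valMinAbs_le
  omega

theorem separated_ends_signedMagnitude_iff (ha : a ≤ m) (x : Fin n → ZMod (2 * m + 1)) (i : Fin n) :
    Separated 1 a (0, 0) (labelled (signedMagnitude ∘ x) i) ∧
        Separated 1 a (labelled (signedMagnitude ∘ x) i) (m + 1, 0) ↔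
      (∀ k : ℤ, 0 ≤ k → k ≤ a → x i ≠ k) ∧
        ∀ k : ℤ, Odd k → 1 ≤ k → k ≤ 2 * (a : ℤ) - 1 → 2 * x i ≠ k := by
  have := natAbs_valMinAbs_two_mul_add_one_le (x i)
  rw [← ZMod.coe_valMinAbs (x i), forall_intCast_zmod_ne_iff (by omega) (by omega),
    forall_odd_two_mul_intCast_zmod_ne_iff ha this]
  refine (separated_ends_iff i _).trans ?_
  omega

theorem separated_or_separated_signedMagnitude_iff (ha : a ≤ m) {x : Fin n → ZMod (2 * m + 1)}
    (hends : ∀ i, Separated 1 a (0, 0) (labelled (signedMagnitude ∘ x) i) ∧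
      Separated 1 a (labelled (signedMagnitude ∘ x) i) (m + 1, 0))
    {i j : Fin n} (hij : i < j) :
    (Separated 1 a (labelled (signedMagnitude ∘ x) i) (labelled (signedMagnitude ∘ x) j) ∨
        Separated 1 a (labelled (signedMagnitude ∘ x) j) (labelled (signedMagnitude ∘ x) i)) ↔
      ∀ k : ℤ, 0 ≤ k → k ≤ a → x i - x j ≠ k ∧ x i + x j ≠ k := by
  have := natAbs_valMinAbs_two_mul_add_one_le (x i)
  have := natAbs_valMinAbs_two_mul_add_one_le (x j)
  simp only [forall_and]
  rw [← ZMod.coe_valMinAbs (x i), ← ZMod.coe_valMinAbs (x j), ← Int.cast_sub, ← Int.cast_add,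
    forall_intCast_zmod_ne_iff (by omega) (by omega),
    forall_intCast_zmod_ne_iff (by omega) (by omega)]
  exact separated_or_separated_iff hij ((separated_ends_iff i _).1 (hends i))
    ((separated_ends_iff j _).1 (hends j))

theorem signedMagnitude_comp_mem_placements_iff (ha : a ≤ m) (x : Fin n → ZMod (2 * m + 1)) :
    signedMagnitude ∘ x ∈ placements n 1 a (m + 1) ↔
      (∀ i, ∀ k : ℤ, 0 ≤ k → k ≤ a → x i ≠ k) ∧
      (∀ i, ∀ k : ℤ, Odd k → 1 ≤ k → k ≤ 2 * (a : ℤ) - 1 → 2 * x i ≠ k) ∧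
      ∀ i j, i < j → ∀ k : ℤ, 0 ≤ k → k ≤ a → x i - x j ≠ k ∧ x i + x j ≠ k := by
  have : Std.Symm fun i j : Fin n =>
      Separated 1 a (labelled (signedMagnitude ∘ x) i) (labelled (signedMagnitude ∘ x) j) ∨
        Separated 1 a (labelled (signedMagnitude ∘ x) j) (labelled (signedMagnitude ∘ x) i) :=
    ⟨fun _ _ => Or.symm⟩
  have ends_iff := forall_congr' (separated_ends_signedMagnitude_iff ha x)
  rw [forall_and, forall_and] at ends_iff
  rw [placements, Set.mem_ofPred_eq, pairwise_iff_lt, ← and_assoc, ← and_assoc, ← ends_iff,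
    ← forall_and]
  refine and_congr_right fun hends => forall₃_congr fun i j hij => ?_
  exact separated_or_separated_signedMagnitude_iff ha hends hij

theorem W_eq_ncard_placements (ha : a ≤ m) :
    W n (2 * m + 1) a = (placements n 1 a (m + 1)).ncard := by
  refine Set.BijOn.ncard_eq (f := (signedMagnitude ∘ ·)) ⟨?_, ?_, ?_⟩
  · exact fun x hx => (signedMagnitude_comp_mem_placements_iff ha x).2 hx
  · exact (signedMagnitude_injective _).comp_left.injOn
  · intro t ht
    have exists_preimage (i) : ∃ x : ZMod (2 * m + 1), signedMagnitude x = t i := by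
      have hl : 0 + (1 + a * _) ≤ (t i).1 := ht.1 i
      have hr : (t i).1 + (1 + a * _) ≤ m + 1 := ht.2.1 i
      exact exists_signedMagnitude_eq (by omega) (by omega)
    choose x hx using exists_preimage
    obtain rfl : signedMagnitude ∘ x = t := funext hx
    exact ⟨x, (signedMagnitude_comp_mem_placements_iff ha x).1 ht, rfl⟩

end Residues

/-! ### Counting -/

theorem sum_card_gapVectors_descents {n : ℕ} (hn : 0 < n) (k : ℕ) :
    ∑ w : SignedPerm n, (gapVectors w.descents k).card = (2 * k) ^ n := by
  simpa using (ncard_placements hn 0 one_pos k).symm.trans (ncard_placements_zero_one n k)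

theorem ncard_placements_one {n a M : ℕ} (hn : 0 < n) (ha : 0 < a) (hM : (n + 1) * a ≤ M) :
    (placements n 1 a (n + 1 + M)).ncard = ∑ r : Fin (n + 1) → Fin a,
      if a ∣ M - ∑ i, (r i : ℕ) then (2 * ((M - ∑ i, (r i : ℕ)) / a)) ^ n else 0 := by
  have card_eq (w : SignedPerm n) :
      (gapVectors (fun i => 1 + a * w.descents i) (n + 1 + M)).card =
        ∑ r : Fin (n + 1) → Fin a, if a ∣ M - ∑ i, (r i : ℕ) then
          (gapVectors w.descents ((M - ∑ i, (r i : ℕ)) / a)).card else 0 := by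
    rw [← card_gapVectors_smul ha hM, ← card_gapVectors_add 1 (a • _)]
    simp [Pi.add_def, Pi.smul_def]
  rw [ncard_placements hn 1 ha, Finset.sum_congr rfl fun w _ => card_eq w, Finset.sum_comm]
  simp only [← sum_card_gapVectors_descents hn, Finset.sum_ite_irrel, Finset.sum_const_zero]

theorem pow_mul_ncard_placements_one {n a M : ℕ} (hn : 0 < n) (ha : 0 < a)
    (hM : (n + 1) * a ≤ M) :
    (a : ℚ) ^ (n + 1) * (placements n 1 a (n + 1 + M)).ncard =
      ∑ r : Fin (n + 1) → Fin a, (2 * ((M - ∑ i, (r i : ℕ) : ℤ) : ℚ)) ^ n := by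
  have term_eq (r : Fin (n + 1) → Fin a) :
      (a : ℚ) ^ (n + 1) * ((if a ∣ M - ∑ i, (r i : ℕ) then
        (2 * ((M - ∑ i, (r i : ℕ)) / a)) ^ n else 0 : ℕ) : ℚ) =
      2 ^ n * ((if (a : ℤ) ∣ M - ∑ i, (r i : ℕ) then (a : ℚ) else 0) *
        ((M - ∑ i, (r i : ℕ) : ℤ) : ℚ) ^ n) := by
    rw [← Nat.cast_sub ((sum_val_le_mul r).trans hM)]
    simp only [Int.natCast_dvd_natCast]
    split_ifs with hdvd
    · obtain ⟨k, hk⟩ := hdvd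
      rw [hk, Nat.mul_div_cancel_left k ha]
      push_cast
      ring
    · simp
  rw [ncard_placements_one hn ha hM, Nat.cast_sum, Finset.mul_sum,
    Finset.sum_congr rfl fun r _ => term_eq r]
  simp only [mul_pow, ← Finset.mul_sum, sum_dvd_indicator_mul_pow ha]

theorem polysum_X_pow_mul_phi2_pow (e a N q n : ℕ) :
    polysum (X ^ e * phi2 a ^ N) q n =
      ∑ r : Fin N → Fin a, ((q : ℚ) - (e + 2 * ∑ i, (r i : ℕ) : ℕ)) ^ n := by
  simp only [phi2_pow, Finset.mul_sum, ← pow_add, polysum_sum_X_pow]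

/-- Proposition 6.1, case `a = b = c`. For all large odd `q`, the
number of points avoiding the arrangement `x_i = 0,...,a`; `2x_i = 1,3,...,2a-1`;
`x_i ± x_j = 0,...,a` equals `(1/a^(n+1)) ∑_k g_k (q-k)^n`, where
`g = y^(2n+1) (1 + y^2 + ... + y^(2a-2))^(n+1)`. -/
theorem statement17 (n a : ℕ) (hn : 1 ≤ n) (ha : 1 ≤ a) :
    ∃ N : ℕ, ∀ q : ℕ, Odd q → N < q →
      (W n q a : ℚ) =
        (1 / (a : ℚ) ^ (n + 1)) * polysum (X ^ (2 * n + 1) * (phi2 a) ^ (n + 1)) q n := by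
  refine ⟨2 * ((n + 1) * a + n), ?_⟩
  rintro _ ⟨m, rfl⟩ hq
  obtain ⟨M, rfl⟩ : ∃ M, m = n + M := ⟨m - n, by omega⟩
  have hM : (n + 1) * a ≤ M := by omega
  have ha_le : a ≤ n + M := by nlinarith
  have hcount := pow_mul_ncard_placements_one hn ha hM
  rw [W_eq_ncard_placements ha_le, add_right_comm, polysum_X_pow_mul_phi2_pow, one_div,
    eq_inv_mul_iff_mul_eq₀ (by positivity), hcount]
  refine Finset.sum_congr rfl fun r _ => ?_
  push_cast
  ring
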